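/- Let P ⊂ ℝ² be a two-dimensional convex lattice polytope containing exactly n lattice points and no lattice points in its interior. Then P is affinely unimodularly equivalent to exactly one of the following: the triangle with vertices (0,0), (n−2,0), (0,1); a quadrilateral with vertices (0,0), (k,0), (l,1), (0,1) for some integers k ≥ l ≥ 1 with k + l = n − 2; or (only when n = 6) the triangle with vertices (0,0), (2,0), (0,2). -/

import Mathlib

/-- The coercion of an integer lattice point of `ℤ²` to `ℝ²`. -/
def toR2 (v : Fin 2 → ℤ) : Fin 2 → ℝ := fun i => (v i : ℝ)

/-- A convex lattice polytope in `ℝ²`: the convex hull of a nonempty finite set of points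
of `ℤ²`. -/
def IsConvexLatticePolytope (P : Set (Fin 2 → ℝ)) : Prop :=
  ∃ S : Finset (Fin 2 → ℤ), S.Nonempty ∧ P = convexHull ℝ (toR2 '' (S : Set (Fin 2 → ℤ)))

/-- The affine map `ℝ² → ℝ²` given by `x ↦ A x + b`, for an integer matrix `A` and an
integer vector `b`. -/
def unimodMap (A : Matrix (Fin 2) (Fin 2) ℤ) (b : Fin 2 → ℤ) (x : Fin 2 → ℝ) : Fin 2 → ℝ :=
  (A.map (Int.cast : ℤ → ℝ)).mulVec x + toR2 b

/-- Two subsets of `ℝ²` are affinely unimodularly equivalent if an affine map `x ↦ A x + b`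
with `A ∈ GL₂(ℤ)` and `b ∈ ℤ²` carries the first onto the second. -/
def UnimodEquiv (P Q : Set (Fin 2 → ℝ)) : Prop :=
  ∃ (A : Matrix (Fin 2) (Fin 2) ℤ) (b : Fin 2 → ℤ), IsUnit A.det ∧ unimodMap A b '' P = Q

/-- The triangle with vertices `(0,0)`, `(n-2,0)`, `(0,1)`. -/
def modelTriangle (n : ℕ) : Set (Fin 2 → ℝ) :=
  convexHull ℝ {![0, 0], ![(n : ℝ) - 2, 0], ![0, 1]}

/-- The quadrilateral with vertices `(0,0)`, `(k,0)`, `(l,1)`, `(0,1)`. -/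
def modelQuad (k l : ℕ) : Set (Fin 2 → ℝ) :=
  convexHull ℝ {![0, 0], ![(k : ℝ), 0], ![(l : ℝ), 1], ![0, 1]}

/-- The triangle with vertices `(0,0)`, `(2,0)`, `(0,2)`. -/
def modelI : Set (Fin 2 → ℝ) :=
  convexHull ℝ {![0, 0], ![2, 0], ![0, 2]}

/-- The list of model polytopes with `n` lattice points and no interior lattice points. -/
def modelPolytopes (n : ℕ) : Set (Set (Fin 2 → ℝ)) :=
  {M | M = modelTriangle n ∨
    (∃ k l : ℕ, 1 ≤ l ∧ l ≤ k ∧ k + l = n - 2 ∧ M = modelQuad k l) ∨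
    (n = 6 ∧ M = modelI)}

/-
A hollow lattice polygon either has lattice width one or is twice a unimodular triangle.
If two distinct lattice points of it are congruent modulo 2, place them so that `(0,0)`, `(1,0)`,
`(2,0)` belong to the polygon. Hollowness at `(1,0)` puts the polygon on one side of the first axis;
a point of height `b ≥ 2`, sheared to abscissa `-b < a ≤ 0`, has to be `(0,2)`, and hollowness at
the midpoints of the three edges then leaves only twice the standard simplex. If the lattice points
are pairwise incongruent modulo 2, they contain a unimodular triangle and at most one further
point, which convexity and hollowness keep within a unit strip. A polygon of width one has two rows
of lattice points, hence is a (possibly degenerate) trapezoid, and trapezoids are told apart by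
their number of lattice points and the length of the longer row.
-/

section LatticeSets

variable {M N : Type*} [AddCommGroup M] [AddCommGroup N]

/-- A set of lattice points is *lattice convex* if it contains every lattice point of each
(possibly degenerate) triangle spanned by three of its points. The integers `n₁, n₂, n₃` are
barycentric coordinates of `q`, cleared of denominators. -/
def LatticeConvex (S : Set M) : Prop :=
  ∀ ⦃p₁⦄, p₁ ∈ S → ∀ ⦃p₂⦄, p₂ ∈ S → ∀ ⦃p₃⦄, p₃ ∈ S → ∀ (q : M) (n₁ n₂ n₃ : ℤ),
    0 ≤ n₁ → 0 ≤ n₂ → 0 ≤ n₃ → 0 < n₁ + n₂ + n₃ →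
    n₁ • (p₁ - q) + n₂ • (p₂ - q) + n₃ • (p₃ - q) = 0 → q ∈ S

/-- A set of lattice points is *full-dimensional* if no nonzero linear functional is constant
on it. -/
def IsFullDimensional (S : Set M) : Prop :=
  ∀ f : M →ₗ[ℤ] ℤ, f ≠ 0 → ∃ p ∈ S, ∃ q ∈ S, f p ≠ f q

/-- A set of lattice points is *hollow* if every lattice point can be weakly separated from it,
which expresses that no lattice point is interior to its convex hull. -/
def IsHollow (S : Set M) : Prop :=
  ∀ q : M, ∃ f : M →ₗ[ℤ] ℝ, f ≠ 0 ∧ ∀ p ∈ S, f (p - q) ≤ 0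

lemma affineEquiv_sub (e : N ≃ᵃ[ℤ] M) (p q : N) : e p - e q = e.linear (p - q) :=
  (e.toAffineMap.linearMap_vsub p q).symm

variable {S : Set M}

lemma LatticeConvex.preimage (hS : LatticeConvex S) (e : N ≃ᵃ[ℤ] M) :
    LatticeConvex (e ⁻¹' S) := by
  intro p₁ h₁ p₂ h₂ p₃ h₃ q n₁ n₂ n₃ hn₁ hn₂ hn₃ hn hq
  refine hS h₁ h₂ h₃ (e q) n₁ n₂ n₃ hn₁ hn₂ hn₃ hn ?_
  simp only [affineEquiv_sub, ← map_zsmul, ← map_add, hq, map_zero]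

lemma IsFullDimensional.preimage (hS : IsFullDimensional S) (e : N ≃ᵃ[ℤ] M) :
    IsFullDimensional (e ⁻¹' S) := by
  intro f hf
  obtain ⟨p, hp, q, hq, hpq⟩ := hS (f ∘ₗ e.linear.symm) fun h ↦ hf <| by
    ext x
    simpa using LinearMap.congr_fun h (e.linear x)
  refine ⟨e.symm p, by simpa, e.symm q, by simpa, fun h ↦ hpq ?_⟩
  have hsymm := affineEquiv_sub e.symm p q
  rw [← sub_eq_zero, ← map_sub] at h ⊢
  rw [hsymm] at h
  exact h

lemma IsHollow.preimage (hS : IsHollow S) (e : N ≃ᵃ[ℤ] M) : IsHollow (e ⁻¹' S) := by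
  intro q
  obtain ⟨f, hf, hsupp⟩ := hS (e q)
  refine ⟨f ∘ₗ e.linear, fun h ↦ hf ?_, fun p hp ↦ ?_⟩
  · ext x
    simpa using LinearMap.congr_fun h (e.linear.symm x)
  · have hle := hsupp (e p) hp
    rw [affineEquiv_sub] at hle
    exact hle

/-- The properties characterizing, for `M = ℤ²`, the sets of lattice points of two-dimensional
convex lattice polytopes without interior lattice points. -/
structure IsHollowPolygon (S : Set M) : Prop where
  finite : S.Finite
  convex : LatticeConvex S
  fullDimensional : IsFullDimensional S
  hollow : IsHollow S

lemma IsHollowPolygon.preimage (hS : IsHollowPolygon S) (e : N ≃ᵃ[ℤ] M) :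
    IsHollowPolygon (e ⁻¹' S) :=
  ⟨hS.finite.preimage e.injective.injOn, hS.convex.preimage e, hS.fullDimensional.preimage e,
    hS.hollow.preimage e⟩

end LatticeSets

section LatticeEquiv

/-- Affine equivalence of sets of lattice points: an affine automorphism of `ℤ²` carries one
onto the other. -/
def LatticeEquiv (S T : Set (Fin 2 → ℤ)) : Prop :=
  ∃ e : (Fin 2 → ℤ) ≃ᵃ[ℤ] (Fin 2 → ℤ), e ⁻¹' T = S

variable {S T U : Set (Fin 2 → ℤ)}

lemma LatticeEquiv.symm : LatticeEquiv S T → LatticeEquiv T S := by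
  rintro ⟨e, rfl⟩
  exact ⟨e.symm, by ext; simp only [Set.mem_preimage, AffineEquiv.apply_symm_apply]⟩

lemma LatticeEquiv.trans : LatticeEquiv S T → LatticeEquiv T U → LatticeEquiv S U := by
  rintro ⟨e, rfl⟩ ⟨e', rfl⟩
  exact ⟨e.trans e', rfl⟩

lemma LatticeEquiv.ncard_eq : LatticeEquiv S T → S.ncard = T.ncard := by
  rintro ⟨e, rfl⟩
  exact Set.ncard_preimage_of_injective_subset_range e.injective (by simp [e.surjective.range_eq])

/-- The affine automorphism `q ↦ A q + b` of `ℤ²` for a unimodular matrix `A`. -/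
noncomputable def latticeAffineEquiv (A : Matrix (Fin 2) (Fin 2) ℤ) (hA : IsUnit A.det)
    (b : Fin 2 → ℤ) : (Fin 2 → ℤ) ≃ᵃ[ℤ] (Fin 2 → ℤ) :=
  (A.toLinearEquiv (Pi.basisFun ℤ (Fin 2)) hA).toAffineEquiv.trans
    (AffineEquiv.constVAdd ℤ (Fin 2 → ℤ) b)

lemma latticeAffineEquiv_apply (A : Matrix (Fin 2) (Fin 2) ℤ) (hA : IsUnit A.det)
    (b q : Fin 2 → ℤ) : latticeAffineEquiv A hA b q = A.mulVec q + b := by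
  simp [latticeAffineEquiv, add_comm, ← Matrix.toLin'_apply, Matrix.toLin_eq_toLin']

lemma latticeAffineEquiv_of_apply {α β γ δ : ℤ} (hdet : IsUnit !![α, β; γ, δ].det)
    (b q : Fin 2 → ℤ) : latticeAffineEquiv !![α, β; γ, δ] hdet b q =
      ![α * q 0 + β * q 1 + b 0, γ * q 0 + δ * q 1 + b 1] := by
  ext i
  fin_cases i <;> simp [latticeAffineEquiv_apply, dotProduct, Fin.sum_univ_two]

lemma exists_matrix_of_latticeAffineEquiv (e : (Fin 2 → ℤ) ≃ᵃ[ℤ] (Fin 2 → ℤ)) :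
    ∃ A : Matrix (Fin 2) (Fin 2) ℤ, IsUnit A.det ∧ ∀ q, e q = A.mulVec q + e 0 := by
  refine ⟨LinearMap.toMatrix' e.linear, ?_, fun q ↦ ?_⟩
  · rw [LinearMap.det_toMatrix']
    exact e.linear.isUnit_det'
  · rw [LinearMap.toMatrix'_mulVec, ← sub_eq_iff_eq_add, affineEquiv_sub, sub_zero]
    rfl

end LatticeEquiv

section Separation

/-- The determinant of two vectors of `ℤ²`; its sign tells on which side of the line through `u`
the vector `v` lies. -/
def cross (u v : Fin 2 → ℤ) : ℤ := u 0 * v 1 - u 1 * v 0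

lemma cons_eta (q : Fin 2 → ℤ) : ![q 0, q 1] = q := FinVec.etaExpand_eq q

lemma weighted_sub_eq_zero {a₁ b₁ a₂ b₂ a₃ b₃ x y n₁ n₂ n₃ : ℤ}
    (hx : n₁ * (a₁ - x) + n₂ * (a₂ - x) + n₃ * (a₃ - x) = 0)
    (hy : n₁ * (b₁ - y) + n₂ * (b₂ - y) + n₃ * (b₃ - y) = 0) :
    n₁ • (![a₁, b₁] - ![x, y]) + n₂ • (![a₂, b₂] - ![x, y]) + n₃ • (![a₃, b₃] - ![x, y]) = 0 := by
  ext i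
  fin_cases i
  exacts [by simpa using hx, by simpa using hy]

lemma cross_smul_eq (u v x : Fin 2 → ℤ) : cross u v • x = cross x v • u + cross u x • v := by
  refine funext (Fin.forall_fin_two.2 ⟨?_, ?_⟩) <;>
  · simp only [cross, Pi.add_apply, Pi.smul_apply, smul_eq_mul]
    ring

lemma cross_mul_map (f : (Fin 2 → ℤ) →ₗ[ℤ] ℝ) (u v x : Fin 2 → ℤ) :
    cross u v * f x = cross x v * f u + cross u x * f v := by
  have hf := congrArg f (cross_smul_eq u v x)
  simp only [map_add, map_zsmul] at hf
  simpa only [zsmul_eq_mul] using hf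

lemma eq_zero_of_cross_ne_zero {f : (Fin 2 → ℤ) →ₗ[ℤ] ℝ} {u v : Fin 2 → ℤ}
    (huv : cross u v ≠ 0) (hu : f u = 0) (hv : f v = 0) : f = 0 := by
  ext x
  simpa [hu, hv, huv] using cross_mul_map f u v (Pi.single x 1)

variable {S : Set (Fin 2 → ℤ)} {p₁ p₂ p₃ q : Fin 2 → ℤ}

lemma IsHollow.cross_eq_zero_of_mem_interior (hS : IsHollow S) (h₁ : p₁ ∈ S) (h₂ : p₂ ∈ S)
    (h₃ : p₃ ∈ S) {n₁ n₂ n₃ : ℤ} (hn₁ : 0 < n₁) (hn₂ : 0 < n₂) (hn₃ : 0 < n₃)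
    (hq : n₁ • (p₁ - q) + n₂ • (p₂ - q) + n₃ • (p₃ - q) = 0) :
    cross (p₁ - q) (p₂ - q) = 0 := by
  by_contra hcross
  obtain ⟨f, hf, hsupp⟩ := hS q
  have hsum : n₁ * f (p₁ - q) + n₂ * f (p₂ - q) + n₃ * f (p₃ - q) = 0 := by
    have hfq := congrArg f hq
    simp only [map_add, map_zsmul, map_zero] at hfq
    simpa only [zsmul_eq_mul] using hfq
  have hterm {n : ℤ} (hn : 0 < n) {p} (hp : p ∈ S) : n * f (p - q) ≤ 0 :=
    mul_nonpos_of_nonneg_of_nonpos (mod_cast hn.le) (hsupp _ hp)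
  have hfp {n : ℤ} (hn : 0 < n) {p} (h : n * f (p - q) = 0) : f (p - q) = 0 :=
    (mul_eq_zero.mp h).resolve_left (mod_cast hn.ne')
  have hterm₁ := hterm hn₁ h₁
  have hterm₂ := hterm hn₂ h₂
  have hterm₃ := hterm hn₃ h₃
  exact hf (eq_zero_of_cross_ne_zero hcross (hfp hn₁ (by linarith)) (hfp hn₂ (by linarith)))

/-- If `q` is the midpoint of two points of a hollow set, then the line through them is a
supporting line. -/
lemma IsHollow.cross_nonneg (hS : IsHollow S) (h₁ : p₁ ∈ S) (h₂ : p₂ ∈ S)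
    (hq : p₁ + p₂ = (2 : ℤ) • q) (h₃ : p₃ ∈ S) (hpos : 0 < cross (p₂ - q) (p₃ - q))
    {r : Fin 2 → ℤ} (hr : r ∈ S) : 0 ≤ cross (p₂ - q) (r - q) := by
  by_contra! hneg
  obtain ⟨f, hf, hsupp⟩ := hS q
  have hfline : f (p₂ - q) = 0 := by
    have hopp : p₁ - q = -(p₂ - q) := by
      rw [eq_sub_of_add_eq hq]
      module
    have hle := hsupp p₁ h₁
    rw [hopp, map_neg] at hle
    linarith [hsupp p₂ h₂]
  have hprop : cross (p₂ - q) (p₃ - q) * f (r - q) = cross (p₂ - q) (r - q) * f (p₃ - q) := by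
    simpa only [hfline, mul_zero, zero_add] using cross_mul_map f (p₂ - q) (p₃ - q) (r - q)
  have hposR : (0 : ℝ) < cross (p₂ - q) (p₃ - q) := mod_cast hpos
  have hnegR : (cross (p₂ - q) (r - q) : ℝ) < 0 := mod_cast hneg
  have hfp : f (p₃ - q) = 0 := by
    nlinarith [mul_nonneg_of_nonpos_of_nonpos hnegR.le (hsupp _ h₃),
      mul_nonpos_of_nonneg_of_nonpos hposR.le (hsupp _ hr), hsupp _ h₃]
  exact hf (eq_zero_of_cross_ne_zero hpos.ne' hfline hfp)

lemma LatticeConvex.mem_row (hS : LatticeConvex S) {a b x y : ℤ} (ha : ![a, y] ∈ S)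
    (hb : ![b, y] ∈ S) (hax : a ≤ x) (hxb : x ≤ b) : ![x, y] ∈ S := by
  rcases hax.eq_or_lt with rfl | hax
  · exact ha
  exact hS ha hb hb ![x, y] (b - x) (x - a) 0 (by lia) (by lia) le_rfl (by lia)
    (weighted_sub_eq_zero (by ring) (by ring))

end Separation

section NormalForm

lemma exists_latticeAffineEquiv_row {p q : Fin 2 → ℤ} (hpq : p ≠ q) :
    ∃ (e : (Fin 2 → ℤ) ≃ᵃ[ℤ] (Fin 2 → ℤ)) (g : ℤ), 0 < g ∧ e ![0, 0] = p ∧ e ![g, 0] = q := by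
  have hgcd : 0 < Int.gcd (q 0 - p 0) (q 1 - p 1) := by
    refine Int.gcd_pos_iff.mpr ?_
    by_contra! h
    exact hpq (funext (Fin.forall_fin_two.2 ⟨by lia, by lia⟩))
  obtain ⟨u, w, huw, hu, hw⟩ := Int.exists_gcd_one hgcd
  obtain ⟨α, β, hαβ⟩ := Int.isCoprime_iff_gcd_eq_one.mpr huw
  have hdet : IsUnit !![u, -β; w, α].det := by
    rw [Matrix.det_fin_two_of]
    exact Int.isUnit_iff.mpr (Or.inl (by linarith))
  refine ⟨latticeAffineEquiv _ hdet p, Int.gcd (q 0 - p 0) (q 1 - p 1), mod_cast hgcd, ?_, ?_⟩ <;>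
  · rw [latticeAffineEquiv_of_apply]
    refine funext (Fin.forall_fin_two.2 ⟨?_, ?_⟩) <;>
    · simp only [Matrix.cons_val_zero, Matrix.cons_val_one, Matrix.cons_val_fin_one]
      lia

lemma exists_latticeAffineEquiv_shear (a : ℤ) {b : ℤ} (hb : b ≠ 0) :
    ∃ (e : (Fin 2 → ℤ) ≃ᵃ[ℤ] (Fin 2 → ℤ)) (a' : ℤ), -|b| < a' ∧ a' ≤ 0 ∧
      (∀ x, e ![x, 0] = ![x, 0]) ∧ e ![a', |b|] = ![a, b] := by
  have hdet : IsUnit !![1, -(-a / |b|); 0, b.sign].det := by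
    rw [Matrix.det_fin_two_of]
    rcases hb.lt_or_gt with h | h <;> simp [Int.sign_eq_neg_one_of_neg, Int.sign_eq_one_of_pos, h]
  refine ⟨latticeAffineEquiv _ hdet 0, -(-a % |b|), ?_, ?_, fun x ↦ ?_, ?_⟩
  · linarith [Int.emod_lt_of_pos (-a) (abs_pos.mpr hb)]
  · linarith [Int.emod_nonneg (-a) (abs_pos.mpr hb).ne']
  · simp [latticeAffineEquiv_of_apply]
  · have hdiv := Int.emod_add_mul_ediv (-a) |b|
    rw [latticeAffineEquiv_of_apply]
    refine funext (Fin.forall_fin_two.2 ⟨?_, ?_⟩)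
    · simp only [Matrix.cons_val_zero, Matrix.cons_val_one,
        Matrix.cons_val_fin_one, Pi.zero_apply]
      linarith
    · simp [Int.sign_mul_abs]

/-- Up to an affine automorphism of `ℤ²`, the set lies in the strip `0 ≤ y ≤ 1`. -/
def HasWidthOne (S : Set (Fin 2 → ℤ)) : Prop :=
  ∃ e : (Fin 2 → ℤ) ≃ᵃ[ℤ] (Fin 2 → ℤ), ∀ q ∈ S, e q 1 = 0 ∨ e q 1 = 1

variable {S T : Set (Fin 2 → ℤ)}

lemma LatticeEquiv.hasWidthOne : LatticeEquiv S T → HasWidthOne T → HasWidthOne S := by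
  rintro ⟨e, rfl⟩ ⟨e', he'⟩
  exact ⟨e.trans e', fun q hq ↦ he' (e q) hq⟩

/-- The lattice points of the triangle with vertices `(0,0)`, `(2,0)`, `(0,2)`. -/
def doubledSimplex : Set (Fin 2 → ℤ) := {q | 0 ≤ q 0 ∧ 0 ≤ q 1 ∧ q 0 + q 1 ≤ 2}

lemma mem_doubledSimplex {x y : ℤ} : ![x, y] ∈ doubledSimplex ↔ 0 ≤ x ∧ 0 ≤ y ∧ x + y ≤ 2 :=
  Iff.rfl

end NormalForm

section Midpoint

/-- Some segment between two distinct points of the set has a lattice point as its midpoint. -/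
def HasLatticeMidpoint (S : Set (Fin 2 → ℤ)) : Prop :=
  ∃ m d : Fin 2 → ℤ, d ≠ 0 ∧ m - d ∈ S ∧ m + d ∈ S

variable {S : Set (Fin 2 → ℤ)}

lemma HasLatticeMidpoint.of_preimage {e : (Fin 2 → ℤ) ≃ᵃ[ℤ] (Fin 2 → ℤ)}
    (h : HasLatticeMidpoint (e ⁻¹' S)) : HasLatticeMidpoint S := by
  obtain ⟨m, d, hd, hsub, hadd⟩ := h
  refine ⟨e m, e.linear d, by simpa, ?_, ?_⟩
  · convert Set.mem_preimage.mp hsub using 1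
    rw [sub_eq_iff_eq_add, ← sub_eq_iff_eq_add', affineEquiv_sub, sub_sub_cancel]
  · convert Set.mem_preimage.mp hadd using 1
    rw [eq_comm, ← sub_eq_iff_eq_add', affineEquiv_sub, add_sub_cancel_left]

lemma eq_of_even_sub (hmid : ¬ HasLatticeMidpoint S) {p q : Fin 2 → ℤ} (hp : p ∈ S)
    (hq : q ∈ S) (hx : Even (q 0 - p 0)) (hy : Even (q 1 - p 1)) : p = q := by
  by_contra hpq
  choose d hd using show ∀ i, Even (q i - p i) from Fin.forall_fin_two.mpr ⟨hx, hy⟩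
  refine hmid ⟨p + d, d, ?_, by simpa, ?_⟩
  · rintro rfl
    exact hpq (funext fun i ↦ by simpa [sub_eq_zero, eq_comm] using hd i)
  · convert hq
    ext i
    simp only [Pi.add_apply]
    linarith [hd i]

lemma IsHollow.apex_eq (hS : IsHollow S) (h0 : ![0, 0] ∈ S) (h2 : ![2, 0] ∈ S) {a b : ℤ}
    (hab : ![a, b] ∈ S) (hba : -b < a) (ha : a ≤ 0) (hb : 2 ≤ b) : a = 0 ∧ b = 2 := by
  rcases ha.lt_or_eq with ha | rfl
  · have hcross := hS.cross_eq_zero_of_mem_interior (q := ![0, 1]) h0 h2 hab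
      (n₁ := 2 * (b - 1) + a) (n₂ := -a) (n₃ := 2) (by lia) (by lia) (by lia)
      (weighted_sub_eq_zero (by ring) (by ring))
    simp [cross] at hcross
  · refine ⟨rfl, hb.antisymm' (not_lt.mp fun hb' ↦ ?_)⟩
    have hcross := hS.cross_eq_zero_of_mem_interior (q := ![1, 1]) h0 h2 hab
      (n₁ := b - 2) (n₂ := b) (n₃ := 2) (by lia) (by lia) (by lia)
      (weighted_sub_eq_zero (by ring) (by ring))
    simp [cross] at hcross

lemma eq_doubledSimplex (hconv : LatticeConvex S) (hS : IsHollow S) (h00 : ![0, 0] ∈ S)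
    (h20 : ![2, 0] ∈ S) (h02 : ![0, 2] ∈ S) : S = doubledSimplex := by
  ext r
  refine ⟨fun hr ↦ ?_, fun ⟨hx, hy, hxy⟩ ↦ ?_⟩
  · have hbottom := hS.cross_nonneg (q := ![1, 0]) h00 h20 (by decide) h02 (by decide) hr
    have hleft := hS.cross_nonneg (q := ![0, 1]) h02 h00 (by decide) h20 (by decide) hr
    have hslanted := hS.cross_nonneg (q := ![1, 1]) h20 h02 (by decide) h00 (by decide) hr
    simp only [cross, Pi.sub_apply, Matrix.cons_val_zero, Matrix.cons_val_one,
      Matrix.cons_val_fin_one] at hbottom hleft hslanted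
    exact ⟨by lia, by lia, by lia⟩
  · rw [← cons_eta r]
    exact hconv h00 h20 h02 _ (2 - r 0 - r 1) (r 0) (r 1) (by lia) hx hy (by lia)
      (weighted_sub_eq_zero (by ring) (by ring))

lemma IsHollow.hasWidthOne_of_abs_le (hS : IsHollow S) (h0 : ![0, 0] ∈ S) (h2 : ![2, 0] ∈ S)
    (habs : ∀ q ∈ S, |q 1| ≤ 1) : HasWidthOne S := by
  have hside {p} (hp : p ∈ S) (hpos : 0 < p 1) {r} (hr : r ∈ S) : 0 ≤ r 1 := by
    simpa [cross] using hS.cross_nonneg (q := ![1, 0]) h0 h2 (by decide) hp (by simpa [cross]) hr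
  by_cases hup : ∃ p ∈ S, 0 < p 1
  · obtain ⟨p, hp, hpos⟩ := hup
    refine ⟨AffineEquiv.refl ℤ _, fun q hq ↦ ?_⟩
    have hle := abs_le.mp (habs q hq)
    have hge := hside hp hpos hq
    simp only [AffineEquiv.refl_apply]
    lia
  · push Not at hup
    refine ⟨AffineEquiv.constVAdd ℤ _ ![0, 1], fun q hq ↦ ?_⟩
    have hle := abs_le.mp (habs q hq)
    have hle' := hup q hq
    simp only [AffineEquiv.constVAdd_apply, vadd_eq_add, Pi.add_apply, Matrix.cons_val_one,
      Matrix.cons_val_fin_one]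
    lia

lemma IsHollow.hasWidthOne_or_latticeEquiv_doubledSimplex (hS : IsHollow S)
    (hconv : LatticeConvex S) (h0 : ![0, 0] ∈ S) (h2 : ![2, 0] ∈ S) :
    HasWidthOne S ∨ LatticeEquiv S doubledSimplex := by
  by_cases habs : ∀ q ∈ S, |q 1| ≤ 1
  · exact Or.inl (hS.hasWidthOne_of_abs_le h0 h2 habs)
  push Not at habs
  obtain ⟨q, hq, hlt⟩ := habs
  obtain ⟨e, a, ha, ha', hrow, he⟩ := exists_latticeAffineEquiv_shear (q 0) (b := q 1)
    (abs_pos.mp (by lia))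
  have h0' : ![0, 0] ∈ e ⁻¹' S := by rwa [Set.mem_preimage, hrow]
  have h2' : ![2, 0] ∈ e ⁻¹' S := by rwa [Set.mem_preimage, hrow]
  have hapex : ![a, |q 1|] ∈ e ⁻¹' S := by
    rwa [Set.mem_preimage, he, cons_eta]
  obtain ⟨rfl, hheight⟩ := (hS.preimage e).apex_eq h0' h2' hapex ha ha' hlt
  rw [hheight] at hapex
  exact Or.inr (LatticeEquiv.symm
    ⟨e, eq_doubledSimplex (hconv.preimage e) (hS.preimage e) h0' h2' hapex⟩)

lemma HasLatticeMidpoint.hasWidthOne_or_latticeEquiv_doubledSimplex (hmid : HasLatticeMidpoint S)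
    (hconv : LatticeConvex S) (hS : IsHollow S) :
    HasWidthOne S ∨ LatticeEquiv S doubledSimplex := by
  obtain ⟨m, d, hd, hsub, hadd⟩ := hmid
  obtain ⟨e, g, hg, he0, heg⟩ := exists_latticeAffineEquiv_row (p := m - d) (q := m) (by simpa)
  have hlinear : e.linear ![g, 0] = d := by
    have hdiff := affineEquiv_sub e ![g, 0] ![0, 0]
    rw [heg, he0, sub_sub_cancel] at hdiff
    rw [hdiff]
    congr 1
    simp
  have h0 : ![0, 0] ∈ e ⁻¹' S := by rwa [Set.mem_preimage, he0]
  have h2g : ![2 * g, 0] ∈ e ⁻¹' S := by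
    have hdiff := affineEquiv_sub e ![2 * g, 0] ![g, 0]
    rw [heg, sub_eq_iff_eq_add] at hdiff
    have hstep : ![2 * g, 0] - ![g, 0] = ![g, 0] := by
      rw [sub_eq_iff_eq_add]
      simp [two_mul]
    rwa [Set.mem_preimage, hdiff, hstep, hlinear, add_comm]
  have h2 : ![2, 0] ∈ e ⁻¹' S := (hconv.preimage e).mem_row h0 h2g (by lia) (by lia)
  have hequiv : LatticeEquiv S (e ⁻¹' S) := LatticeEquiv.symm ⟨e, rfl⟩
  exact ((hS.preimage e).hasWidthOne_or_latticeEquiv_doubledSimplex (hconv.preimage e) h0 h2).imp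
    hequiv.hasWidthOne hequiv.trans

end Midpoint

section NoMidpoint

variable {S : Set (Fin 2 → ℤ)}

lemma exists_unimodular_triangle (hconv : LatticeConvex S)
    (hfull : IsFullDimensional S) : ∃ e : (Fin 2 → ℤ) ≃ᵃ[ℤ] (Fin 2 → ℤ),
      ![0, 0] ∈ e ⁻¹' S ∧ ![1, 0] ∈ e ⁻¹' S ∧ ![0, 1] ∈ e ⁻¹' S := by
  obtain ⟨p, hp, q, hq, hpq⟩ := hfull (LinearMap.proj 0) fun h ↦ by
    simpa using LinearMap.congr_fun h 1
  obtain ⟨e, g, hg, he0, heg⟩ := exists_latticeAffineEquiv_row (ne_of_apply_ne _ hpq)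
  have h0 : ![0, 0] ∈ e ⁻¹' S := by rwa [Set.mem_preimage, he0]
  have h1 : ![1, 0] ∈ e ⁻¹' S :=
    (hconv.preimage e).mem_row h0 (by rwa [Set.mem_preimage, heg]) zero_le_one hg
  obtain ⟨v, hv, hv1⟩ : ∃ v ∈ e ⁻¹' S, v 1 ≠ 0 := by
    obtain ⟨v, hv, w, hw, hvw⟩ := hfull.preimage e (LinearMap.proj 1) fun h ↦ by
      simpa using LinearMap.congr_fun h 1
    by_contra! hrow
    exact hvw ((hrow v hv).trans (hrow w hw).symm)
  obtain ⟨e', a, ha, ha', hrow, he'⟩ := exists_latticeAffineEquiv_shear (v 0) hv1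
  have h0' : ![0, 0] ∈ e' ⁻¹' (e ⁻¹' S) := by rwa [Set.mem_preimage, hrow]
  have h1' : ![1, 0] ∈ e' ⁻¹' (e ⁻¹' S) := by rwa [Set.mem_preimage, hrow]
  have hapex : ![a, |v 1|] ∈ e' ⁻¹' (e ⁻¹' S) := by
    rwa [Set.mem_preimage, he', cons_eta]
  -- `-b < a ≤ 0` puts `(0, 1)` into the triangle with vertices `(0, 0)`, `(1, 0)`, `(a, b)`.
  exact ⟨e'.trans e, h0', h1', (hconv.preimage e).preimage e' h0' h1' hapex _ (|v 1| - 1 + a)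
    (-a) 1 (by lia) (by lia) zero_le_one (by lia) (weighted_sub_eq_zero (by ring) (by ring))⟩

lemma IsHollow.eq_one_of_odd (hmid : ¬ HasLatticeMidpoint S) (hconv : LatticeConvex S)
    (hS : IsHollow S) (h00 : ![0, 0] ∈ S) (h10 : ![1, 0] ∈ S) (h01 : ![0, 1] ∈ S) {a b : ℤ}
    (hab : ![a, b] ∈ S) (ha : Odd a) (hb : Odd b) : a = 1 ∨ b = 1 := by
  have hparity {c d : ℤ} (hc : Odd c) (hd : Odd d) (hcd : ![c, d] ∈ S) : c = a ∧ d = b := by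
    have heq := eq_of_even_sub hmid hcd hab (ha.sub_odd hc) (hb.sub_odd hd)
    exact ⟨congrFun heq 0, congrFun heq 1⟩
  by_contra! hne
  -- Otherwise convexity provides another odd point, or a point of the triangle is interior.
  obtain ⟨i, hi⟩ := ha
  obtain ⟨j, hj⟩ := hb
  rcases lt_or_ge 0 a with ha | ha <;> rcases lt_or_ge 0 b with hb | hb
  · refine hne.1 (hparity odd_one odd_one ?_).1.symm
    exact hconv h10 h01 hab _ (b - 1) (a - 1) 1 (by lia) (by lia) (by lia) (by lia)
      (weighted_sub_eq_zero (by ring) (by ring))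
  · rcases le_or_gt (a + b) 0 with hsum | hsum
    · refine hne.1 (hparity odd_one (by decide : Odd (-1)) ?_).1.symm
      exact hconv hab h10 h00 _ 1 (-b - a) (a - 1) (by lia) (by lia) (by lia) (by lia)
        (weighted_sub_eq_zero (by ring) (by ring))
    · have hcross := hS.cross_eq_zero_of_mem_interior (q := ![1, 0]) hab h01 h00
        (n₁ := 1) (n₂ := -b) (n₃ := a + b - 1) (by lia) (by lia) (by lia)
        (weighted_sub_eq_zero (by ring) (by ring))
      simp only [cross, Pi.sub_apply, Matrix.cons_val_zero, Matrix.cons_val_one,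
        Matrix.cons_val_fin_one] at hcross
      lia
  · rcases le_or_gt (a + b) 0 with hsum | hsum
    · refine hne.2 (hparity (by decide : Odd (-1)) odd_one ?_).2.symm
      exact hconv hab h01 h00 _ 1 (-b - a) (b - 1) (by lia) (by lia) (by lia) (by lia)
        (weighted_sub_eq_zero (by ring) (by ring))
    · have hcross := hS.cross_eq_zero_of_mem_interior (q := ![0, 1]) hab h10 h00
        (n₁ := 1) (n₂ := -a) (n₃ := a + b - 1) (by lia) (by lia) (by lia)
        (weighted_sub_eq_zero (by ring) (by ring))
      simp only [cross, Pi.sub_apply, Matrix.cons_val_zero, Matrix.cons_val_one,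
        Matrix.cons_val_fin_one] at hcross
      lia
  · have hcross := hS.cross_eq_zero_of_mem_interior (q := ![0, 0]) h10 h01 hab
      (n₁ := -a) (n₂ := -b) (n₃ := 1) (by lia) (by lia) (by lia)
      (weighted_sub_eq_zero (by ring) (by ring))
    simp [cross] at hcross

lemma eq_or_odd_of_unimodular_triangle (hmid : ¬ HasLatticeMidpoint S) (h00 : ![0, 0] ∈ S)
    (h10 : ![1, 0] ∈ S) (h01 : ![0, 1] ∈ S) {p : Fin 2 → ℤ} (hp : p ∈ S) :
    p = ![0, 0] ∨ p = ![1, 0] ∨ p = ![0, 1] ∨ Odd (p 0) ∧ Odd (p 1) := by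
  rcases Int.even_or_odd (p 0) with hx | hx <;> rcases Int.even_or_odd (p 1) with hy | hy
  · exact Or.inl (eq_of_even_sub hmid h00 hp (hx.sub Even.zero) (hy.sub Even.zero)).symm
  · exact Or.inr (Or.inr (Or.inl
      (eq_of_even_sub hmid h01 hp (hx.sub Even.zero) (hy.sub_odd odd_one)).symm))
  · exact Or.inr (Or.inl
      (eq_of_even_sub hmid h10 hp (hx.sub_odd odd_one) (hy.sub Even.zero)).symm)
  · exact Or.inr (Or.inr (Or.inr ⟨hx, hy⟩))

lemma IsHollow.hasWidthOne_of_unimodular_triangle (hmid : ¬ HasLatticeMidpoint S)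
    (hconv : LatticeConvex S) (hS : IsHollow S) (h00 : ![0, 0] ∈ S) (h10 : ![1, 0] ∈ S)
    (h01 : ![0, 1] ∈ S) : HasWidthOne S := by
  by_cases hstrip : ∀ p ∈ S, p 0 = 0 ∨ p 0 = 1
  · refine ⟨latticeAffineEquiv !![0, 1; 1, 0] (by simp) 0, fun p hp ↦ ?_⟩
    simpa [latticeAffineEquiv_of_apply] using hstrip p hp
  push Not at hstrip
  obtain ⟨u, hu, hu0, hu1⟩ := hstrip
  refine ⟨AffineEquiv.refl ℤ _, fun p hp ↦ ?_⟩
  rcases eq_or_odd_of_unimodular_triangle hmid h00 h10 h01 hu with rfl | rfl | rfl | ⟨hux, huy⟩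
  · exact absurd rfl hu0
  · exact absurd rfl hu1
  · exact absurd rfl hu0
  have hu_height : u 1 = 1 := (hS.eq_one_of_odd hmid hconv h00 h10 h01
    (by rwa [cons_eta]) hux huy).resolve_left hu1
  rcases eq_or_odd_of_unimodular_triangle hmid h00 h10 h01 hp with rfl | rfl | rfl | ⟨hpx, hpy⟩
  · exact Or.inl rfl
  · exact Or.inl rfl
  · exact Or.inr rfl
  · rw [eq_of_even_sub hmid hp hu (hux.sub_odd hpx) (huy.sub_odd hpy)]
    exact Or.inr hu_height

theorem IsHollowPolygon.hasWidthOne_or_latticeEquiv_doubledSimplex (hS : IsHollowPolygon S) :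
    HasWidthOne S ∨ LatticeEquiv S doubledSimplex := by
  by_cases hmid : HasLatticeMidpoint S
  · exact hmid.hasWidthOne_or_latticeEquiv_doubledSimplex hS.convex hS.hollow
  obtain ⟨e, h00, h10, h01⟩ := exists_unimodular_triangle hS.convex hS.fullDimensional
  have hequiv : LatticeEquiv S (e ⁻¹' S) := LatticeEquiv.symm ⟨e, rfl⟩
  exact Or.inl (hequiv.hasWidthOne ((hS.hollow.preimage e).hasWidthOne_of_unimodular_triangle
    (fun h ↦ hmid h.of_preimage) (hS.convex.preimage e) h00 h10 h01))

end NoMidpoint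

section Trapezoid

/-- The lattice points of the quadrilateral with vertices `(0,0)`, `(k,0)`, `(l,1)`, `(0,1)`. -/
def trapezoid (k l : ℕ) : Set (Fin 2 → ℤ) :=
  {q | q 1 = 0 ∧ 0 ≤ q 0 ∧ q 0 ≤ k ∨ q 1 = 1 ∧ 0 ≤ q 0 ∧ q 0 ≤ l}

variable {S : Set (Fin 2 → ℤ)} {k l k' l' : ℕ}

lemma mem_trapezoid {x y : ℤ} :
    ![x, y] ∈ trapezoid k l ↔ y = 0 ∧ 0 ≤ x ∧ x ≤ k ∨ y = 1 ∧ 0 ≤ x ∧ x ≤ l :=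
  Iff.rfl

lemma trapezoid_latticeEquiv_swap (k l : ℕ) : LatticeEquiv (trapezoid k l) (trapezoid l k) := by
  refine ⟨latticeAffineEquiv !![1, 0; 0, -1] (by simp) ![0, 1], ?_⟩
  ext q
  simp only [Set.mem_preimage, trapezoid, Set.mem_ofPred_eq, latticeAffineEquiv_of_apply,
    Matrix.cons_val_zero, Matrix.cons_val_one, Matrix.cons_val_fin_one]
  lia

lemma pos_of_isFullDimensional_trapezoid (hfull : IsFullDimensional (trapezoid k l))
    (hlk : l ≤ k) : 1 ≤ k := by
  obtain ⟨p, hp, q, hq, hpq⟩ := hfull (LinearMap.proj 0) fun h ↦ by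
    simpa using LinearMap.congr_fun h 1
  simp only [LinearMap.proj_apply, trapezoid, Set.mem_ofPred_eq] at hp hq hpq
  lia

lemma LatticeConvex.exists_row_eq_Icc (hconv : LatticeConvex S) (hfin : S.Finite) {x₀ y : ℤ}
    (hx₀ : ![x₀, y] ∈ S) : ∃ (a : ℤ) (k : ℕ), ∀ x, ![x, y] ∈ S ↔ a ≤ x ∧ x ≤ a + k := by
  have hrow : {x | ![x, y] ∈ S}.Finite :=
    hfin.preimage fun x _ x' _ h ↦ congrFun h 0
  obtain ⟨a, ha, hmin⟩ := Set.exists_min_image _ id hrow ⟨x₀, hx₀⟩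
  obtain ⟨b, hb, hmax⟩ := Set.exists_max_image _ id hrow ⟨x₀, hx₀⟩
  have hab : a ≤ b := hmin b hb
  refine ⟨a, (b - a).toNat, fun x ↦ ⟨fun hx ↦ ?_, fun hx ↦ ?_⟩⟩
  · have hax : a ≤ x := hmin x hx
    have hxb : x ≤ b := hmax x hx
    lia
  · exact hconv.mem_row ha hb hx.1 (by lia)

lemma latticeEquiv_trapezoid_of_rows {a₀ a₁ : ℤ} (hstrip : ∀ q ∈ S, q 1 = 0 ∨ q 1 = 1)
    (h₀ : ∀ x, ![x, 0] ∈ S ↔ a₀ ≤ x ∧ x ≤ a₀ + k) (h₁ : ∀ x, ![x, 1] ∈ S ↔ a₁ ≤ x ∧ x ≤ a₁ + l) :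
    LatticeEquiv S (trapezoid k l) := by
  refine ⟨latticeAffineEquiv !![1, a₀ - a₁; 0, 1] (by simp) ![-a₀, 0], ?_⟩
  ext q
  have hmem : q ∈ S ↔ q 1 = 0 ∧ ![q 0, 0] ∈ S ∨ q 1 = 1 ∧ ![q 0, 1] ∈ S := by
    refine ⟨fun hq ↦ ?_, ?_⟩
    · rw [← cons_eta q] at hq
      rcases hstrip _ hq with h | h
      · exact Or.inl ⟨h, by simpa [show q 1 = 0 from h] using hq⟩
      · exact Or.inr ⟨h, by simpa [show q 1 = 1 from h] using hq⟩
    · rintro (⟨h, hq⟩ | ⟨h, hq⟩) <;>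
      · rw [← h, cons_eta] at hq
        exact hq
  rw [hmem, h₀, h₁]
  simp only [Set.mem_preimage, trapezoid, Set.mem_ofPred_eq, latticeAffineEquiv_of_apply,
    Matrix.cons_val_zero, Matrix.cons_val_one, Matrix.cons_val_fin_one]
  lia

lemma IsHollowPolygon.exists_latticeEquiv_trapezoid (hS : IsHollowPolygon S)
    (hwidth : HasWidthOne S) : ∃ k l : ℕ, 1 ≤ k ∧ l ≤ k ∧ LatticeEquiv S (trapezoid k l) := by
  suffices h : ∃ k l, LatticeEquiv S (trapezoid k l) by
    obtain ⟨k, l, hkl, h⟩ : ∃ k l, l ≤ k ∧ LatticeEquiv S (trapezoid k l) := by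
      obtain ⟨k, l, h⟩ := h
      rcases le_total l k with hlk | hkl
      · exact ⟨k, l, hlk, h⟩
      · exact ⟨l, k, hkl, h.trans (trapezoid_latticeEquiv_swap k l)⟩
    obtain ⟨e, he⟩ := h.symm
    exact ⟨k, l, pos_of_isFullDimensional_trapezoid (he ▸ hS.fullDimensional.preimage e) hkl,
      hkl, h⟩
  obtain ⟨e, hstrip⟩ := hwidth
  have hT := hS.preimage e.symm
  replace hstrip : ∀ q ∈ e.symm ⁻¹' S, q 1 = 0 ∨ q 1 = 1 := fun q hq ↦ by
    simpa using hstrip _ hq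
  obtain ⟨p, hp, q, hq, hpq⟩ := hT.fullDimensional (LinearMap.proj 1) fun h ↦ by
    simpa using LinearMap.congr_fun h 1
  simp only [LinearMap.proj_apply] at hpq
  have hrow {y : ℤ} (hy : p 1 = y ∨ q 1 = y) :
      ∃ (a : ℤ) (k : ℕ), ∀ x, ![x, y] ∈ e.symm ⁻¹' S ↔ a ≤ x ∧ x ≤ a + k := by
    rcases hy with rfl | rfl
    · exact hT.convex.exists_row_eq_Icc hT.finite (x₀ := p 0) (by rwa [cons_eta])
    · exact hT.convex.exists_row_eq_Icc hT.finite (x₀ := q 0) (by rwa [cons_eta])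
  have hp_height := hstrip p hp
  have hq_height := hstrip q hq
  obtain ⟨a₀, k, h₀⟩ := hrow (y := 0) (by lia)
  obtain ⟨a₁, l, h₁⟩ := hrow (y := 1) (by lia)
  exact ⟨k, l, LatticeEquiv.trans (LatticeEquiv.symm ⟨e.symm, rfl⟩)
    (latticeEquiv_trapezoid_of_rows hstrip h₀ h₁)⟩

lemma hasWidthOne_trapezoid (k l : ℕ) : HasWidthOne (trapezoid k l) :=
  ⟨AffineEquiv.refl ℤ _, fun _ hq ↦ hq.imp And.left And.left⟩

lemma exists_coefficients (e : (Fin 2 → ℤ) ≃ᵃ[ℤ] (Fin 2 → ℤ)) : ∃ a b c d x₀ y₀ : ℤ,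
    a * d - b * c ≠ 0 ∧ ∀ x y, e ![x, y] = ![a * x + b * y + x₀, c * x + d * y + y₀] := by
  obtain ⟨A, hA, he⟩ := exists_matrix_of_latticeAffineEquiv e
  refine ⟨A 0 0, A 0 1, A 1 0, A 1 1, e 0 0, e 0 1, ?_, fun x y ↦ ?_⟩
  · rw [← Matrix.det_fin_two]
    exact hA.ne_zero
  · rw [he]
    ext i
    fin_cases i <;> simp

lemma not_hasWidthOne_doubledSimplex : ¬ HasWidthOne doubledSimplex := by
  rintro ⟨e, hstrip⟩
  obtain ⟨a, b, c, d, x₀, y₀, hdet, he⟩ := exists_coefficients e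
  have h00 := hstrip ![0, 0] (by simp [doubledSimplex])
  have h20 := hstrip ![2, 0] (by simp [doubledSimplex])
  have h02 := hstrip ![0, 2] (by simp [doubledSimplex])
  rw [he] at h00 h20 h02
  simp only [Matrix.cons_val_one, Matrix.cons_val_fin_one] at h00 h20 h02
  obtain rfl : c = 0 := by lia
  obtain rfl : d = 0 := by lia
  simp at hdet

lemma le_of_latticeEquiv_trapezoid (hk : 1 ≤ k) (hlk : l ≤ k) :
    LatticeEquiv (trapezoid k' l') (trapezoid k l) → k' ≤ k := by
  rintro ⟨e, hequiv⟩
  obtain ⟨a, b, c, d, x₀, y₀, hdet, he⟩ := exists_coefficients e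
  have hleft : ![0, 0] ∈ e ⁻¹' trapezoid k l := hequiv ▸ mem_trapezoid.mpr (by lia)
  have hright : ![(k' : ℤ), 0] ∈ e ⁻¹' trapezoid k l := hequiv ▸ mem_trapezoid.mpr (by lia)
  rw [Set.mem_preimage, he, mem_trapezoid] at hleft hright
  by_contra! hlt
  -- The images of `(0, 0)` and `(k', 0)` differ by `k' (a, c)`, but coordinates in `trapezoid k l`
  -- differ by at most `k < k'`.
  have hvanish {t : ℤ} (ht : |t * k'| < k') : t = 0 :=
    (mul_eq_zero.mp (Int.eq_zero_of_abs_lt_dvd (dvd_mul_left _ t) ht)).resolve_right (by lia)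
  obtain rfl : c = 0 := hvanish (abs_lt.mpr (by lia))
  obtain rfl : a = 0 := hvanish (abs_lt.mpr (by lia))
  simp at hdet

lemma ncard_trapezoid (k l : ℕ) : (trapezoid k l).ncard = k + l + 2 := by
  have hinj (y : ℤ) : Function.Injective fun x : ℤ ↦ ![x, y] := fun x x' h ↦ congrFun h 0
  have hrow (m : ℕ) (y : ℤ) : ((fun x ↦ ![x, y]) '' Set.Icc 0 (m : ℤ)).ncard = m + 1 := by
    rw [Set.ncard_image_of_injective _ (hinj y), Set.ncard_eq_toFinset_card']
    simp
  have hunion : trapezoid k l =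
      (fun x ↦ ![x, 0]) '' Set.Icc 0 (k : ℤ) ∪ (fun x ↦ ![x, 1]) '' Set.Icc 0 (l : ℤ) := by
    ext q
    rw [← cons_eta q, mem_trapezoid]
    simp only [Set.mem_union, Set.mem_image, Set.mem_Icc, Matrix.vecCons_inj, and_true,
      ↓existsAndEq, true_and]
    lia
  have hdisj : Disjoint ((fun x ↦ ![x, 0]) '' Set.Icc 0 (k : ℤ))
      ((fun x ↦ ![x, 1]) '' Set.Icc 0 (l : ℤ)) := by
    rw [Set.disjoint_left]
    rintro _ ⟨x, -, rfl⟩ ⟨x', -, h⟩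
    exact one_ne_zero (congrFun h 1)
  rw [hunion, Set.ncard_union_eq hdisj ((Set.finite_Icc _ _).image _)
    ((Set.finite_Icc _ _).image _), hrow, hrow]
  lia

lemma ncard_doubledSimplex : doubledSimplex.ncard = 6 := by
  have hlist : doubledSimplex =
      (({![0, 0], ![1, 0], ![2, 0], ![0, 1], ![1, 1], ![0, 2]} : Finset (Fin 2 → ℤ)) :
        Set (Fin 2 → ℤ)) := by
    ext q
    rw [← cons_eta q, mem_doubledSimplex]
    simp only [Finset.coe_insert, Finset.coe_singleton, Set.mem_insert_iff, Set.mem_singleton_iff,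
      Matrix.vecCons_inj, and_true]
    lia
  rw [hlist, Set.ncard_coe_finset]
  rfl

end Trapezoid

section Polytopes

/-- The inclusion `toR2` of the lattice as a `ℤ`-linear map. -/
def latticeInclusion : (Fin 2 → ℤ) →ₗ[ℤ] (Fin 2 → ℝ) :=
  (Int.castAddHom ℝ).toIntLinearMap.compLeft (Fin 2)

lemma latticeInclusion_apply (q : Fin 2 → ℤ) : latticeInclusion q = toR2 q := rfl

lemma toR2_add (p q : Fin 2 → ℤ) : toR2 (p + q) = toR2 p + toR2 q :=
  map_add latticeInclusion p q

lemma toR2_mk (x y : ℤ) : toR2 ![x, y] = ![(x : ℝ), (y : ℝ)] := by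
  ext i
  fin_cases i <;> rfl

lemma toR2_single (i : Fin 2) : toR2 (Pi.single i 1) = Pi.single i 1 := by
  ext j
  simp [toR2, Pi.single_apply]

lemma isClosedEmbedding_toR2 : Topology.IsClosedEmbedding toR2 :=
  Topology.IsClosedEmbedding.piMap fun _ ↦ Int.isClosedEmbedding_coe_real

lemma linearMap_eq_zero_of_toR2 {F : (Fin 2 → ℝ) →ₗ[ℝ] ℝ} (hF : ∀ q, F (toR2 q) = 0) : F = 0 :=
  (Pi.basisFun ℝ (Fin 2)).ext fun i ↦ by
    rw [Pi.basisFun_apply, ← toR2_single, hF, LinearMap.zero_apply]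

lemma exists_linearMap_toR2_eq (f : (Fin 2 → ℤ) →ₗ[ℤ] ℤ) :
    ∃ F : (Fin 2 → ℝ) →ₗ[ℝ] ℝ, ∀ q, F (toR2 q) = f q := by
  refine ⟨∑ i, (f (Pi.single i 1) : ℝ) • LinearMap.proj i, fun q ↦ ?_⟩
  have hq : q = ∑ i, q i • Pi.single i 1 := pi_eq_sum_univ' q
  conv_rhs => rw [hq, map_sum]
  simp only [map_zsmul, LinearMap.sum_apply, LinearMap.smul_apply, LinearMap.proj_apply, toR2,
    smul_eq_mul, Int.cast_sum, Int.cast_mul, mul_comm]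

variable {P Q : Set (Fin 2 → ℝ)}

lemma vectorSpan_eq_top_of_not_collinear (hP : ¬ Collinear ℝ P) : vectorSpan ℝ P = ⊤ := by
  rw [collinear_iff_finrank_le_one] at hP
  have hle := Submodule.finrank_le (vectorSpan ℝ P)
  refine Submodule.eq_top_of_finrank_eq ?_
  rw [Module.finrank_fin_fun] at hle ⊢
  lia

lemma nonempty_of_not_collinear (hP : ¬ Collinear ℝ P) : P.Nonempty :=
  Set.nonempty_iff_ne_empty.2 fun h ↦ hP (h ▸ collinear_empty ℝ _)

lemma interior_nonempty_of_not_collinear (hP : Convex ℝ P) (h2dim : ¬ Collinear ℝ P) :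
    (interior P).Nonempty := by
  rw [hP.interior_nonempty_iff_affineSpan_eq_top,
    AffineSubspace.affineSpan_eq_top_iff_vectorSpan_eq_top_of_nonempty _ _ _
      (nonempty_of_not_collinear h2dim)]
  exact vectorSpan_eq_top_of_not_collinear h2dim

lemma latticeConvex_preimage_toR2 (hP : Convex ℝ P) : LatticeConvex (toR2 ⁻¹' P) := by
  intro p₁ h₁ p₂ h₂ p₃ h₃ q n₁ n₂ n₃ hn₁ hn₂ hn₃ hn hq
  have hbary : (n₁ : ℝ) • toR2 p₁ + (n₂ : ℝ) • toR2 p₂ + (n₃ : ℝ) • toR2 p₃ =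
      ((n₁ + n₂ + n₃ : ℤ) : ℝ) • toR2 q := by
    have h := congrArg latticeInclusion hq
    simp only [map_add, map_zsmul, map_sub, latticeInclusion_apply, map_zero,
      ← Int.cast_smul_eq_zsmul ℝ] at h
    rw [← sub_eq_zero, ← h]
    push_cast
    module
  have hmem := hP.centerMass_mem (t := Finset.univ) (w := ![(n₁ : ℝ), n₂, n₃])
    (z := ![toR2 p₁, toR2 p₂, toR2 p₃])
    (by simp [Fin.forall_fin_succ, hn₁, hn₂, hn₃])
    (by simpa [Fin.sum_univ_three] using mod_cast hn)
    (by simpa [Fin.forall_fin_succ] using ⟨h₁, h₂, h₃⟩)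
  have hsum : ((n₁ + n₂ + n₃ : ℤ) : ℝ) ≠ 0 := mod_cast hn.ne'
  simpa [Finset.centerMass, Fin.sum_univ_three, hbary, hsum, ← Int.cast_add, smul_smul] using hmem

lemma isHollow_preimage_toR2 (hP : Convex ℝ P) (hne : (interior P).Nonempty)
    (hint : ∀ q, toR2 q ∉ interior P) : IsHollow (toR2 ⁻¹' P) := by
  intro q
  obtain ⟨f, hf⟩ := geometric_hahn_banach_open_point hP.interior isOpen_interior (hint q)
  have hle : closure (interior P) ⊆ {z | f z ≤ f (toR2 q)} :=
    closure_minimal (fun z hz ↦ (hf z hz).le) (isClosed_le f.continuous continuous_const)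
  rw [hP.closure_interior_eq_closure_of_nonempty_interior hne] at hle
  refine ⟨f.toLinearMap.restrictScalars ℤ ∘ₗ latticeInclusion, fun h ↦ ?_, fun p hp ↦ ?_⟩
  · have hzero : f.toLinearMap = 0 := linearMap_eq_zero_of_toR2 fun p ↦ LinearMap.congr_fun h p
    obtain ⟨z, hz⟩ := hne
    refine (hf z hz).ne ?_
    exact (LinearMap.congr_fun hzero z).trans (LinearMap.congr_fun hzero (toR2 q)).symm
  · rw [map_sub, sub_nonpos]
    exact hle (subset_closure hp)

namespace IsConvexLatticePolytope

lemma convex (hP : IsConvexLatticePolytope P) : Convex ℝ P := by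
  obtain ⟨S, -, rfl⟩ := hP
  exact convex_convexHull ℝ _

lemma convexHull_eq (hP : IsConvexLatticePolytope P) :
    convexHull ℝ (toR2 '' (toR2 ⁻¹' P)) = P := by
  refine (convexHull_min (Set.image_preimage_subset _ _) hP.convex).antisymm ?_
  obtain ⟨S, -, rfl⟩ := hP
  exact convexHull_mono (Set.image_mono (Set.image_subset_iff.1 (subset_convexHull ℝ _)))

lemma finite_preimage_toR2 (hP : IsConvexLatticePolytope P) : (toR2 ⁻¹' P).Finite := by
  obtain ⟨S, -, rfl⟩ := hP
  have hcompact := (S.finite_toSet.image toR2).isCompact_convexHull ℝ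
  exact (isClosedEmbedding_toR2.isCompact_preimage hcompact).finite_of_discrete

lemma isFullDimensional_preimage_toR2 (hP : IsConvexLatticePolytope P) (h2dim : ¬ Collinear ℝ P) :
    IsFullDimensional (toR2 ⁻¹' P) := by
  intro f hf
  by_contra! hconst
  obtain ⟨F, hF⟩ := exists_linearMap_toR2_eq f
  obtain ⟨q₀, hq₀⟩ : (toR2 ⁻¹' P).Nonempty := by
    rw [← Set.image_nonempty (f := toR2), ← convexHull_nonempty_iff (𝕜 := ℝ), hP.convexHull_eq]
    exact nonempty_of_not_collinear h2dim
  have hlevel : P ⊆ F ⁻¹' {(f q₀ : ℝ)} := by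
    rw [← hP.convexHull_eq]
    refine convexHull_min ?_ ((convex_singleton _).linear_preimage F)
    rintro _ ⟨q, hq, rfl⟩
    rw [Set.mem_preimage, hF, hconst q hq q₀ hq₀, Set.mem_singleton_iff]
  have hspan : vectorSpan ℝ P ≤ F.ker := by
    refine Submodule.span_le.2 (Set.vsub_subset_iff.2 fun x hx y hy ↦ ?_)
    rw [SetLike.mem_coe, LinearMap.mem_ker, vsub_eq_sub, map_sub, hlevel hx, hlevel hy, sub_self]
  rw [vectorSpan_eq_top_of_not_collinear h2dim, top_le_iff, LinearMap.ker_eq_top] at hspan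
  refine hf (LinearMap.ext fun q ↦ Int.cast_injective (α := ℝ) ?_)
  rw [← hF, hspan, LinearMap.zero_apply, LinearMap.zero_apply, Int.cast_zero]

lemma isHollowPolygon (hP : IsConvexLatticePolytope P) (h2dim : ¬ Collinear ℝ P)
    (hint : ∀ q, toR2 q ∉ interior P) : IsHollowPolygon (toR2 ⁻¹' P) where
  finite := hP.finite_preimage_toR2
  convex := latticeConvex_preimage_toR2 hP.convex
  fullDimensional := hP.isFullDimensional_preimage_toR2 h2dim
  hollow :=
    isHollow_preimage_toR2 hP.convex (interior_nonempty_of_not_collinear hP.convex h2dim) hint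

end IsConvexLatticePolytope

lemma unimodMap_toR2 (A : Matrix (Fin 2) (Fin 2) ℤ) (b q : Fin 2 → ℤ) :
    unimodMap A b (toR2 q) = toR2 (A.mulVec q + b) := by
  rw [toR2_add, unimodMap]
  congr 1
  exact funext fun i ↦ ((Int.castRingHom ℝ).map_mulVec A q i).symm

lemma unimodMap_injective {A : Matrix (Fin 2) (Fin 2) ℤ} (hA : IsUnit A.det) (b : Fin 2 → ℤ) :
    Function.Injective (unimodMap A b) := by
  have hunit : IsUnit (A.map (Int.cast : ℤ → ℝ)) :=
    ((Matrix.isUnit_iff_isUnit_det A).2 hA).map (Int.castRingHom ℝ).mapMatrix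
  exact (add_left_injective (toR2 b)).comp (Matrix.mulVec_injective_of_isUnit hunit)

lemma unimodMap_image_convexHull (A : Matrix (Fin 2) (Fin 2) ℤ) (b : Fin 2 → ℤ)
    (s : Set (Fin 2 → ℝ)) :
    unimodMap A b '' convexHull ℝ s = convexHull ℝ (unimodMap A b '' s) :=
  ((Matrix.mulVecLin (A.map (Int.cast : ℤ → ℝ))).toAffineMap +
    AffineMap.const ℝ (Fin 2 → ℝ) (toR2 b)).image_convexHull s

lemma UnimodEquiv.latticeEquiv : UnimodEquiv P Q → LatticeEquiv (toR2 ⁻¹' P) (toR2 ⁻¹' Q) := by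
  rintro ⟨A, b, hA, rfl⟩
  refine ⟨latticeAffineEquiv A hA b, Set.ext fun q ↦ ?_⟩
  rw [Set.mem_preimage, Set.mem_preimage, latticeAffineEquiv_apply, ← unimodMap_toR2,
    (unimodMap_injective hA b).mem_set_image, Set.mem_preimage]

lemma LatticeEquiv.unimodEquiv (hP : IsConvexLatticePolytope P) (hQ : IsConvexLatticePolytope Q) :
    LatticeEquiv (toR2 ⁻¹' P) (toR2 ⁻¹' Q) → UnimodEquiv P Q := by
  rintro ⟨e, he⟩
  obtain ⟨A, hA, heA⟩ := exists_matrix_of_latticeAffineEquiv e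
  refine ⟨A, e 0, hA, ?_⟩
  have hcomm : unimodMap A (e 0) ∘ toR2 = toR2 ∘ e :=
    funext fun q ↦ by rw [Function.comp_apply, unimodMap_toR2, ← heA, Function.comp_apply]
  rw [← hP.convexHull_eq, unimodMap_image_convexHull, ← Set.image_comp, hcomm, Set.image_comp,
    ← he, Set.image_preimage_eq _ e.surjective, hQ.convexHull_eq]

end Polytopes

section Models

variable {k l n : ℕ}

lemma le_of_toR2_mem_convexHull {V : Set (Fin 2 → ℤ)} {x y : ℤ}
    (hxy : toR2 ![x, y] ∈ convexHull ℝ (toR2 '' V)) (a b c : ℤ)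
    (hV : ∀ v ∈ V, a * v 0 + b * v 1 ≤ c) : a * x + b * y ≤ c := by
  have hconvex : Convex ℝ {z : Fin 2 → ℝ | (a : ℝ) * z 0 + b * z 1 ≤ c} :=
    convex_halfSpace_le
      ((a : ℝ) • LinearMap.proj 0 + (b : ℝ) • LinearMap.proj 1 : (Fin 2 → ℝ) →ₗ[ℝ] ℝ).isLinear _
  have hsub : toR2 '' V ⊆ {z : Fin 2 → ℝ | (a : ℝ) * z 0 + b * z 1 ≤ c} := by
    rintro _ ⟨v, hv, rfl⟩
    simp only [Set.mem_ofPred_eq, toR2]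
    exact_mod_cast hV v hv
  have hle := convexHull_min hsub hconvex hxy
  simp only [Set.mem_ofPred_eq, toR2, Matrix.cons_val_zero, Matrix.cons_val_one,
    Matrix.cons_val_fin_one] at hle
  exact_mod_cast hle

lemma modelQuad_eq (k l : ℕ) : modelQuad k l =
    convexHull ℝ (toR2 '' {![0, 0], ![(k : ℤ), 0], ![(l : ℤ), 1], ![0, 1]}) := by
  simp [modelQuad, Set.image_insert_eq, toR2_mk]

lemma modelI_eq : modelI = convexHull ℝ (toR2 '' {![0, 0], ![2, 0], ![0, 2]}) := by
  simp [modelI, Set.image_insert_eq, toR2_mk]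

lemma isConvexLatticePolytope_modelQuad (k l : ℕ) : IsConvexLatticePolytope (modelQuad k l) :=
  ⟨{![0, 0], ![(k : ℤ), 0], ![(l : ℤ), 1], ![0, 1]}, by simp, by simp [modelQuad_eq]⟩

lemma isConvexLatticePolytope_modelI : IsConvexLatticePolytope modelI :=
  ⟨{![0, 0], ![2, 0], ![0, 2]}, by simp, by simp [modelI_eq]⟩

lemma preimage_toR2_modelQuad (k l : ℕ) : toR2 ⁻¹' modelQuad k l = trapezoid k l := by
  ext q
  rw [← cons_eta q, Set.mem_preimage, mem_trapezoid, modelQuad_eq]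
  constructor
  · intro hq
    have hleft := le_of_toR2_mem_convexHull hq (-1) 0 0 (by simp)
    have hbottom := le_of_toR2_mem_convexHull hq 0 (-1) 0 (by simp)
    have htop := le_of_toR2_mem_convexHull hq 0 1 1 (by simp)
    have hright := le_of_toR2_mem_convexHull hq 1 (k - l) k (by simp)
    obtain hy | hy : q 1 = 0 ∨ q 1 = 1 := by lia
    all_goals rw [hy] at hright ⊢; lia
  · set V : Set (Fin 2 → ℤ) := {![0, 0], ![(k : ℤ), 0], ![(l : ℤ), 1], ![0, 1]}
    have hconv := latticeConvex_preimage_toR2 (convex_convexHull ℝ (toR2 '' V))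
    have hvertex {v : Fin 2 → ℤ} (hv : v ∈ V) :=
      subset_convexHull ℝ _ (Set.mem_image_of_mem toR2 hv)
    rintro (⟨hy, hx, hxk⟩ | ⟨hy, hx, hxl⟩) <;> rw [hy]
    · exact hconv.mem_row (hvertex (by simp [V])) (hvertex (by simp [V])) hx hxk
    · exact hconv.mem_row (hvertex (by simp [V])) (hvertex (by simp [V])) hx hxl

lemma preimage_toR2_modelI : toR2 ⁻¹' modelI = doubledSimplex := by
  ext q
  rw [← cons_eta q, Set.mem_preimage, mem_doubledSimplex, modelI_eq]
  constructor
  · intro hq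
    have hleft := le_of_toR2_mem_convexHull hq (-1) 0 0 (by simp)
    have hbottom := le_of_toR2_mem_convexHull hq 0 (-1) 0 (by simp)
    have hright := le_of_toR2_mem_convexHull hq 1 1 2 (by simp)
    lia
  · rintro ⟨hx, hy, hxy⟩
    have hvertex {v : Fin 2 → ℤ} (hv : v ∈ ({![0, 0], ![2, 0], ![0, 2]} : Set _)) :=
      subset_convexHull ℝ _ (Set.mem_image_of_mem toR2 hv)
    exact latticeConvex_preimage_toR2 (convex_convexHull ℝ _) (hvertex (v := ![0, 0]) (by simp))
      (hvertex (v := ![2, 0]) (by simp)) (hvertex (v := ![0, 2]) (by simp)) ![q 0, q 1]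
      (2 - q 0 - q 1) (q 0) (q 1) (by lia) hx hy (by lia)
      (weighted_sub_eq_zero (by ring) (by ring))

lemma modelTriangle_add_two (k : ℕ) : modelTriangle (k + 2) = modelQuad k 0 := by
  simp [modelTriangle, modelQuad]

lemma mem_modelPolytopes_iff (hn : 3 ≤ n) {M : Set (Fin 2 → ℝ)} : M ∈ modelPolytopes n ↔
    (∃ k l : ℕ, 1 ≤ k ∧ l ≤ k ∧ k + l + 2 = n ∧ M = modelQuad k l) ∨ n = 6 ∧ M = modelI := by
  obtain ⟨m, rfl⟩ : ∃ m, n = m + 2 := ⟨n - 2, by lia⟩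
  rw [modelPolytopes, Set.mem_ofPred_eq, modelTriangle_add_two]
  constructor
  · rintro (rfl | ⟨k, l, _, hlk, hkl, rfl⟩ | hI)
    · exact Or.inl ⟨m, 0, by lia, by lia, by lia, rfl⟩
    · exact Or.inl ⟨k, l, by lia, hlk, by lia, rfl⟩
    · exact Or.inr hI
  · rintro (⟨k, l, _, hlk, hkl, rfl⟩ | hI)
    · rcases l.eq_zero_or_pos with rfl | hl
      · exact Or.inl (by rw [show k = m by lia])
      · exact Or.inr (Or.inl ⟨k, l, hl, hlk, by lia, rfl⟩)
    · exact Or.inr (Or.inr hI)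

lemma eq_of_latticeEquiv_of_mem_modelPolytopes (hn : 3 ≤ n) {M N : Set (Fin 2 → ℝ)}
    (hM : M ∈ modelPolytopes n) (hN : N ∈ modelPolytopes n)
    (hMN : LatticeEquiv (toR2 ⁻¹' M) (toR2 ⁻¹' N)) : M = N := by
  rw [mem_modelPolytopes_iff hn] at hM hN
  rcases hM with ⟨k, l, hk, hlk, hkl, rfl⟩ | ⟨-, rfl⟩ <;>
    rcases hN with ⟨k', l', hk', hlk', hkl', rfl⟩ | ⟨-, rfl⟩ <;>
    simp only [preimage_toR2_modelQuad, preimage_toR2_modelI] at hMN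
  · have hle := le_of_latticeEquiv_trapezoid hk hlk hMN.symm
    have hge := le_of_latticeEquiv_trapezoid hk' hlk' hMN
    obtain rfl : k = k' := by lia
    obtain rfl : l = l' := by lia
    rfl
  · exact absurd (hMN.symm.hasWidthOne (hasWidthOne_trapezoid k l)) not_hasWidthOne_doubledSimplex
  · exact absurd (hMN.hasWidthOne (hasWidthOne_trapezoid k' l')) not_hasWidthOne_doubledSimplex
  · rfl

lemma IsHollowPolygon.exists_modelPolytope {S : Set (Fin 2 → ℤ)} (hS : IsHollowPolygon S) :
    3 ≤ S.ncard ∧ ∃ M ∈ modelPolytopes S.ncard, IsConvexLatticePolytope M ∧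
      LatticeEquiv S (toR2 ⁻¹' M) := by
  rcases hS.hasWidthOne_or_latticeEquiv_doubledSimplex with hwidth | hsimplex
  · obtain ⟨k, l, hk, hlk, htrap⟩ := hS.exists_latticeEquiv_trapezoid hwidth
    have hcard : S.ncard = k + l + 2 := htrap.ncard_eq.trans (ncard_trapezoid k l)
    have hthree : 3 ≤ S.ncard := by lia
    exact ⟨hthree, modelQuad k l,
      (mem_modelPolytopes_iff hthree).2 (Or.inl ⟨k, l, hk, hlk, hcard.symm, rfl⟩),
      isConvexLatticePolytope_modelQuad k l, by rwa [preimage_toR2_modelQuad]⟩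
  · have hcard : S.ncard = 6 := hsimplex.ncard_eq.trans ncard_doubledSimplex
    have hthree : 3 ≤ S.ncard := by lia
    exact ⟨hthree, modelI, (mem_modelPolytopes_iff hthree).2 (Or.inr ⟨hcard, rfl⟩),
      isConvexLatticePolytope_modelI, by rwa [preimage_toR2_modelI]⟩

end Models

/-- A two-dimensional convex lattice polytope in `ℝ²` with exactly `n` lattice points and no
interior lattice points is affinely unimodularly equivalent to exactly one of: the triangle
with vertices `(0,0)`, `(n-2,0)`, `(0,1)`; a quadrilateral with vertices `(0,0)`, `(k,0)`,
`(l,1)`, `(0,1)` with `k ≥ l ≥ 1` and `k + l = n - 2`; or (only when `n = 6`) the triangle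
with vertices `(0,0)`, `(2,0)`, `(0,2)`. -/
theorem classification_of_polytopes_without_interior_points (P : Set (Fin 2 → ℝ))
    (hP : IsConvexLatticePolytope P) (h2dim : ¬ Collinear ℝ P) (n : ℕ)
    (hn : {q : Fin 2 → ℤ | toR2 q ∈ P}.ncard = n)
    (hint : ∀ q : Fin 2 → ℤ, toR2 q ∉ interior P) :
    ∃! M : Set (Fin 2 → ℝ), M ∈ modelPolytopes n ∧ UnimodEquiv P M := by
  subst hn
  obtain ⟨hthree, M, hM, hMpoly, hPM⟩ := (hP.isHollowPolygon h2dim hint).exists_modelPolytope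
  refine ⟨M, ⟨hM, hPM.unimodEquiv hP hMpoly⟩, fun N ⟨hN, hPN⟩ ↦ ?_⟩
  exact eq_of_latticeEquiv_of_mem_modelPolytopes hthree hN hM (hPN.latticeEquiv.symm.trans hPM)
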